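/- If a pointwise-norm limit of a uniformly bounded sequence of contractive completely positive maps into the Calkin algebra B(H)/K(H) admits liftable approximants, then it is liftable: precisely, if Φ̃ : A → B(H)/K(H) is a *-homomorphism from a separable C*-algebra A which is the pointwise limit of contractive completely positive maps each of which lifts to a contractive completely positive map into B(H), then Φ̃ itself lifts to a contractive completely positive map Φ : A → B(H) with π ∘ Φ = Φ̃ (π the quotient map). -/

import Mathlib

/-!
The limit of liftable maps is lifted by correcting the given lifts one after another, by compact
perturbations, until they converge in the point-norm topology of `B(H)` itself.

The correction (`exists_correction`) takes contractive completely positive maps `ψ, Φ : A → B(H)`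
which nearly agree modulo compacts on a finite set `F`, and replaces `Φ` by
`Φ' = (1/n) ∑_{k<n} (Pₖ ψ Pₖ + (1 - Pₖ) Φ (1 - Pₖ))`, where `Pₖ` are the projections onto a chain of
finite-dimensional subspaces `Vₖ` (`blend`). Averages of block-diagonal compressions are completely
positive and contractive, and `Φ' - Φ` is compact-valued since the `Pₖ` have finite rank. This plays
the role of a quasicentral approximate unit, made explicit so that no square roots are needed. The
difference `Φ' a - ψ a` consists of

* the corners `Pₖ ψ(a) (1 - Pₖ)` and `(1 - Pₖ) ψ(a) Pₖ`: the chain is chosen so that `ψ(a)` and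
  `ψ(a)*` map `Vₖ` into `Vₖ₊₁`, hence the corners for different `k` are orthogonal and their average
  has norm at most `‖ψ(a)‖ / √n` (`norm_sum_corner_le`);
* the blocks `(1 - Pₖ) (ψ(a) - Φ(a)) (1 - Pₖ)`, which are small because `V₀` nearly contains the
  range of a compact operator close to `ψ(a) - Φ(a)` (`norm_compression_orthogonal_le`).

Applied along a dense sequence of `A` with errors `2⁻ⁿ`, this yields contractive completely positive
maps `ψₙ`, compact perturbations of a subsequence of the given lifts, which are Cauchy at each point
of the dense sequence and hence, being contractive, everywhere. Their limit is completely positive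
because the positive cone of `Mₙ(B(H))` is closed, and it lifts the given map because the compact
operators are norm closed.
-/


open Matrix

/-- A linear map between ∗-algebras is completely positive if every matrix amplification
preserves positivity (positivity of a matrix over a C*-algebra being `M = Nᴴ * N`). -/
def IsCompletelyPositive {A B : Type*} [Ring A] [StarRing A] [Module ℂ A]
    [Ring B] [StarRing B] [Module ℂ B] (φ : A →ₗ[ℂ] B) : Prop :=
  ∀ (n : ℕ) (M : Matrix (Fin n) (Fin n) A),
    (∃ N : Matrix (Fin n) (Fin n) A, M = Nᴴ * N) →
    ∃ L : Matrix (Fin n) (Fin n) B, M.map φ = Lᴴ * L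

set_option linter.unusedSectionVars false

section Helpers

variable {H : Type*} [NormedAddCommGroup H] [InnerProductSpace ℂ H] [CompleteSpace H]

/-! ### Completely positive maps into `B(H)` -/

/-- A restatement over an abstract C*-algebra: matrices over `B(H)` carry the required functional
calculus only up to a unification that instance search does not perform. -/
lemma nonneg_iff_exists_star_mul_self {B : Type*} [NonUnitalCStarAlgebra B] [PartialOrder B]
    [StarOrderedRing B] (a : B) : 0 ≤ a ↔ ∃ b, a = star b * b :=
  CStarAlgebra.nonneg_iff_eq_star_mul_self

lemma exists_conjTranspose_mul_self_iff_nonneg {n : ℕ} (M : Matrix (Fin n) (Fin n) (H →L[ℂ] H)) :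
    (∃ L : Matrix (Fin n) (Fin n) (H →L[ℂ] H), M = Lᴴ * L) ↔ 0 ≤ CStarMatrix.ofMatrix M :=
  (nonneg_iff_exists_star_mul_self (B := CStarMatrix (Fin n) (Fin n) (H →L[ℂ] H)) _).symm

section CP

variable {A : Type*} [Ring A] [StarRing A] [Module ℂ A]

lemma isCompletelyPositive_zero : IsCompletelyPositive (0 : A →ₗ[ℂ] (H →L[ℂ] H)) := by
  intro n M _
  refine ⟨0, ?_⟩
  ext i j
  simp

lemma IsCompletelyPositive.add {φ ψ : A →ₗ[ℂ] (H →L[ℂ] H)} (hφ : IsCompletelyPositive φ)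
    (hψ : IsCompletelyPositive ψ) : IsCompletelyPositive (φ + ψ) := by
  intro n M hM
  have h1 := (exists_conjTranspose_mul_self_iff_nonneg _).1 (hφ n M hM)
  have h2 := (exists_conjTranspose_mul_self_iff_nonneg _).1 (hψ n M hM)
  refine (exists_conjTranspose_mul_self_iff_nonneg _).2 ?_
  exact add_nonneg h1 h2

lemma IsCompletelyPositive.sum {ι : Type*} (s : Finset ι) {φ : ι → A →ₗ[ℂ] (H →L[ℂ] H)}
    (hφ : ∀ i ∈ s, IsCompletelyPositive (φ i)) : IsCompletelyPositive (∑ i ∈ s, φ i) :=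
  Finset.sum_induction φ IsCompletelyPositive (fun _ _ h1 h2 => h1.add h2)
    isCompletelyPositive_zero hφ

/-- The compression `a ↦ C* φ(a) C` of a linear map `φ` by an operator `C`. -/
noncomputable def compression (C : H →L[ℂ] H) (φ : A →ₗ[ℂ] (H →L[ℂ] H)) :
    A →ₗ[ℂ] (H →L[ℂ] H) :=
  LinearMap.mulLeft ℂ (star C) ∘ₗ LinearMap.mulRight ℂ C ∘ₗ φ

lemma compression_apply (C : H →L[ℂ] H) (φ : A →ₗ[ℂ] (H →L[ℂ] H)) (a : A) :
    compression C φ a = star C * (φ a * C) := rfl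

lemma IsCompletelyPositive.compression {φ : A →ₗ[ℂ] (H →L[ℂ] H)}
    (hφ : IsCompletelyPositive φ) (C : H →L[ℂ] H) :
    IsCompletelyPositive (compression C φ) := by
  intro n M hM
  obtain ⟨L, hL⟩ := hφ n M hM
  refine ⟨L * Matrix.diagonal (fun _ => C), ?_⟩
  rw [Matrix.conjTranspose_mul, Matrix.mul_assoc, ← Matrix.mul_assoc Lᴴ, ← hL,
    Matrix.diagonal_conjTranspose]
  ext i j : 2
  rw [Matrix.diagonal_mul, Matrix.mul_diagonal]
  rfl

lemma IsCompletelyPositive.real_smul {φ : A →ₗ[ℂ] (H →L[ℂ] H)}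
    (hφ : IsCompletelyPositive φ) {c : ℝ} (hc : 0 ≤ c) :
    IsCompletelyPositive ((c : ℂ) • φ) := by
  have h := hφ.compression (((Real.sqrt c : ℝ) : ℂ) • (1 : H →L[ℂ] H))
  convert h using 1
  ext a : 1
  have hc' : ((Real.sqrt c : ℝ) : ℂ) * ((Real.sqrt c : ℝ) : ℂ) = (c : ℂ) := by
    rw [← Complex.ofReal_mul, Real.mul_self_sqrt hc]
  rw [compression_apply, LinearMap.smul_apply, ← hc']
  simp only [star_smul, star_one, smul_mul_assoc, one_mul, mul_smul_comm, mul_one, smul_smul]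
  simp

/-- Complete positivity passes to pointwise norm limits, because the positive cone of
`Mₙ(B(H))` is closed and its norm topology is the entrywise one. -/
lemma isCompletelyPositive_of_tendsto {φ : ℕ → A →ₗ[ℂ] (H →L[ℂ] H)}
    {ψ : A →ₗ[ℂ] (H →L[ℂ] H)} (hφ : ∀ n, IsCompletelyPositive (φ n))
    (h : ∀ a, Filter.Tendsto (fun n => φ n a) Filter.atTop (nhds (ψ a))) :
    IsCompletelyPositive ψ := by
  intro n M hM
  refine (exists_conjTranspose_mul_self_iff_nonneg _).2 ?_
  have key : Filter.Tendsto (fun m => CStarMatrix.ofMatrix (M.map (φ m))) Filter.atTop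
      (nhds (CStarMatrix.ofMatrix (M.map ψ))) := by
    have : Filter.Tendsto (fun m => (M.map (φ m))) Filter.atTop (nhds (M.map ψ)) :=
      tendsto_pi_nhds.2 fun i => tendsto_pi_nhds.2 fun j => h (M i j)
    exact this
  exact CStarAlgebra.isClosed_nonneg.mem_of_tendsto key
    (Filter.Eventually.of_forall fun m =>
      (exists_conjTranspose_mul_self_iff_nonneg _).1 (hφ m n M hM))

end CP

/-! ### Chains of finite-dimensional subspaces -/

/-- A compact operator has range uniformly close to a finite-dimensional subspace. -/
lemma exists_finiteDimensional_near {K : H →L[ℂ] H} (hK : IsCompactOperator K) {δ : ℝ}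
    (hδ : 0 < δ) : ∃ W : Submodule ℂ H, FiniteDimensional ℂ W ∧
      ∀ x, ∃ w ∈ W, ‖K x - w‖ ≤ δ * ‖x‖ := by
  obtain ⟨S, hS, hKS⟩ := IsCompactOperator.image_closedBall_subset_compact
    (f := (K : H →ₗ[ℂ] H)) hK 1
  obtain ⟨t, ht, hSt⟩ := Metric.totallyBounded_iff.1 hS.totallyBounded δ hδ
  refine ⟨Submodule.span ℂ t, FiniteDimensional.span_of_finite ℂ ht, fun x => ?_⟩
  by_cases hx : x = 0
  · exact ⟨0, zero_mem _, by simp [hx]⟩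
  have hx' : ‖x‖ ≠ 0 := norm_ne_zero_iff.2 hx
  have hxC : (‖x‖ : ℂ) ≠ 0 := by exact_mod_cast hx'
  have hmem : K ((‖x‖ : ℂ)⁻¹ • x) ∈ S := hKS ⟨(‖x‖ : ℂ)⁻¹ • x, by
    simp [norm_smul, hx'], rfl⟩
  obtain ⟨y, hy, hyx⟩ := Set.mem_iUnion₂.1 (hSt hmem)
  refine ⟨(‖x‖ : ℂ) • y, Submodule.smul_mem _ _ (Submodule.subset_span hy), ?_⟩
  have : K x - (‖x‖ : ℂ) • y = (‖x‖ : ℂ) • (K ((‖x‖ : ℂ)⁻¹ • x) - y) := by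
    rw [smul_sub, map_smul, smul_smul, mul_inv_cancel₀ hxC, one_smul]
  rw [this, norm_smul, mul_comm]
  rw [mem_ball_iff_norm] at hyx
  simp only [Complex.norm_real, norm_norm]
  gcongr

lemma norm_sub_starProjection_le (V : Submodule ℂ H) [V.HasOrthogonalProjection] (x : H) {w : H}
    (hw : w ∈ V) : ‖x - V.starProjection x‖ ≤ ‖x - w‖ := by
  rw [Submodule.starProjection_minimal]
  exact ciInf_le ⟨0, by rintro _ ⟨y, rfl⟩; positivity⟩ (⟨w, hw⟩ : V)

/-- Given finitely many operators `T a` and compact operators `K a`, there is an increasing chain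
of finite-dimensional subspaces along which every `T a` is block tridiagonal, and whose terms
nearly contain the ranges of the `K a`. -/
lemma exists_chain {ι : Type*} (F : Finset ι) (T K : ι → H →L[ℂ] H)
    (hK : ∀ a ∈ F, IsCompactOperator (K a)) {δ : ℝ} (hδ : 0 < δ) :
    ∃ V : ℕ → Submodule ℂ H, (∀ k, FiniteDimensional ℂ (V k)) ∧ Monotone V ∧
      (∀ k, ∀ a ∈ F, ∀ x ∈ V k, T a x ∈ V (k + 1) ∧ star (T a) x ∈ V (k + 1)) ∧
      ∀ k, ∀ a ∈ F, ∀ x, ∃ w ∈ V k, ‖K a x - w‖ ≤ δ * ‖x‖ := by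
  classical
  choose! W hWfin hW using fun a (ha : a ∈ F) => exists_finiteDimensional_near (hK a ha) hδ
  let step : Submodule ℂ H → Submodule ℂ H := fun V =>
    V ⊔ F.sup fun a => V.map (T a : H →ₗ[ℂ] H) ⊔ V.map (star (T a) : H →L[ℂ] H).toLinearMap
  let V : ℕ → Submodule ℂ H := fun k => step^[k] (F.sup W)
  have hsucc : ∀ k, V (k + 1) = step (V k) := fun k => Function.iterate_succ_apply' _ _ _
  have hmono : Monotone V := monotone_nat_of_le_succ fun k => by
    rw [hsucc]; exact le_sup_left
  refine ⟨V, fun k => ?_, hmono, fun k a ha x hx => ?_, fun k a ha x => ?_⟩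
  · rw [← Submodule.fg_iff_finiteDimensional]
    induction k with
    | zero =>
      exact Finset.sup_induction (p := Submodule.FG) Submodule.fg_bot
        (fun _ h1 _ h2 => Submodule.FG.sup h1 h2)
        fun a ha => (Submodule.fg_iff_finiteDimensional _).2 (hWfin a ha)
    | succ k ih =>
      rw [hsucc]
      refine ih.sup (Finset.sup_induction (p := Submodule.FG) Submodule.fg_bot
        (fun _ h1 _ h2 => Submodule.FG.sup h1 h2) fun a ha => (ih.map _).sup (ih.map _))
  · rw [hsucc]
    have hle := (Finset.le_sup (f := fun a => (V k).map (T a : H →ₗ[ℂ] H) ⊔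
      (V k).map (star (T a) : H →L[ℂ] H).toLinearMap) ha).trans
        (le_sup_right : _ ≤ step (V k))
    exact ⟨hle (Submodule.mem_sup_left ⟨x, hx, rfl⟩), hle (Submodule.mem_sup_right ⟨x, hx, rfl⟩)⟩
  · obtain ⟨w, hw, h⟩ := hW a ha x
    exact ⟨w, hmono (Nat.zero_le k) (Finset.le_sup (f := W) ha hw), h⟩

/-! ### Norm estimates for corners and blocks -/

/-- The off-diagonal corners of an operator mapping each space of a chain into the next one have
mutually orthogonal ranges, so a sum of `n` of them has norm at most `√n ‖T‖`. -/
lemma norm_sq_sum_corner_le (V : ℕ → Submodule ℂ H) [∀ k, FiniteDimensional ℂ (V k)]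
    (hV : Monotone V) (T : H →L[ℂ] H) (hT : ∀ k, ∀ x ∈ V k, T x ∈ V (k + 1)) (n : ℕ) (x : H) :
    ‖∑ k ∈ Finset.range n, ((1 - (V k).starProjection) * T * (V k).starProjection) x‖ ^ 2 ≤
      n * (‖T‖ * ‖x‖) ^ 2 := by
  have hY : ∀ k, ((1 - (V k).starProjection) * T * (V k).starProjection) x =
      T ((V k).starProjection x) - (V k).starProjection (T ((V k).starProjection x)) :=
    fun k => rfl
  have hmem : ∀ n, ∑ k ∈ Finset.range n,
      ((1 - (V k).starProjection) * T * (V k).starProjection) x ∈ V n := fun n =>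
    Submodule.sum_mem _ fun k hk => by
      have hkn : k + 1 ≤ n := Finset.mem_range.1 hk
      rw [hY]
      exact sub_mem (hV hkn (hT k _ ((V k).starProjection_apply_mem x)))
        (hV (by omega) ((V k).starProjection_apply_mem _))
  induction n with
  | zero => simp
  | succ n ih =>
    have horth : inner ℂ (∑ k ∈ Finset.range n,
        ((1 - (V k).starProjection) * T * (V k).starProjection) x)
        (((1 - (V n).starProjection) * T * (V n).starProjection) x) = 0 :=
      Submodule.inner_right_of_mem_orthogonal (hmem n)
        ((V n).sub_starProjection_mem_orthogonal (T ((V n).starProjection x)))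
    have hle : ‖((1 - (V n).starProjection) * T * (V n).starProjection) x‖ ≤ ‖T‖ * ‖x‖ := by
      rw [hY]
      calc _ ≤ ‖T ((V n).starProjection x) - 0‖ :=
            norm_sub_starProjection_le (V n) _ (zero_mem _)
        _ ≤ ‖T‖ * ‖(V n).starProjection x‖ := by rw [sub_zero]; exact T.le_opNorm _
        _ ≤ ‖T‖ * ‖x‖ := by gcongr; exact (V n).norm_starProjection_apply_le x
    rw [Finset.sum_range_succ, pow_two, norm_add_sq_eq_norm_sq_add_norm_sq_of_inner_eq_zero _ _
      horth, ← pow_two, ← pow_two]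
    have := pow_le_pow_left₀ (norm_nonneg _) hle 2
    rw [Nat.cast_succ, add_mul, one_mul]
    exact add_le_add ih this

lemma norm_sum_corner_le (V : ℕ → Submodule ℂ H) [∀ k, FiniteDimensional ℂ (V k)]
    (hV : Monotone V) (T : H →L[ℂ] H) (hT : ∀ k, ∀ x ∈ V k, T x ∈ V (k + 1)) (n : ℕ) :
    ‖∑ k ∈ Finset.range n, (1 - (V k).starProjection) * T * (V k).starProjection‖ ≤
      Real.sqrt n * ‖T‖ := by
  refine ContinuousLinearMap.opNorm_le_bound _ (by positivity) fun x => ?_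
  rw [_root_.sum_apply]
  refine le_of_sq_le_sq ?_ (by positivity)
  refine (norm_sq_sum_corner_le V hV T hT n x).trans_eq ?_
  rw [mul_assoc, mul_pow (Real.sqrt n), Real.sq_sqrt (Nat.cast_nonneg n)]

lemma star_starProjection (V : Submodule ℂ H) [V.HasOrthogonalProjection] :
    star V.starProjection = V.starProjection :=
  isSelfAdjoint_starProjection V

lemma norm_sum_corner_le' (V : ℕ → Submodule ℂ H) [∀ k, FiniteDimensional ℂ (V k)]
    (hV : Monotone V) (T : H →L[ℂ] H) (hT : ∀ k, ∀ x ∈ V k, star T x ∈ V (k + 1)) (n : ℕ) :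
    ‖∑ k ∈ Finset.range n, (V k).starProjection * T * (1 - (V k).starProjection)‖ ≤
      Real.sqrt n * ‖T‖ := by
  have h := norm_sum_corner_le V hV (star T) hT n
  rw [← norm_star, norm_star T] at h
  simpa [star_sum, star_mul, star_sub, star_starProjection, mul_assoc] using h

/-- Pythagoras, used for the domain and for the range. -/
lemma norm_block_diagonal_le (V : Submodule ℂ H) [V.HasOrthogonalProjection] {X Y : H →L[ℂ] H}
    {c : ℝ} (hX : ‖X‖ ≤ c) (hY : ‖Y‖ ≤ c) :
    ‖V.starProjection * (X * V.starProjection) +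
      (1 - V.starProjection) * (Y * (1 - V.starProjection))‖ ≤ c := by
  have hc : 0 ≤ c := (norm_nonneg _).trans hX
  refine ContinuousLinearMap.opNorm_le_bound _ hc fun x => ?_
  set p := V.starProjection x with hp
  have happ : (V.starProjection * (X * V.starProjection) +
      (1 - V.starProjection) * (Y * (1 - V.starProjection))) x =
      V.starProjection (X p) + (Y (x - p) - V.starProjection (Y (x - p))) := rfl
  rw [happ]
  refine le_of_sq_le_sq ?_ (by positivity)
  rw [pow_two, norm_add_sq_eq_norm_sq_add_norm_sq_of_inner_eq_zero _ _
    (Submodule.inner_right_of_mem_orthogonal (V.starProjection_apply_mem _)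
      (V.sub_starProjection_mem_orthogonal _))]
  have hx : ‖x‖ * ‖x‖ = ‖p‖ * ‖p‖ + ‖x - p‖ * ‖x - p‖ := by
    rw [← norm_add_sq_eq_norm_sq_add_norm_sq_of_inner_eq_zero _ _
      (Submodule.inner_right_of_mem_orthogonal (V.starProjection_apply_mem x)
      (V.sub_starProjection_mem_orthogonal x)), add_sub_cancel]
  have h1 : ‖V.starProjection (X p)‖ ≤ c * ‖p‖ :=
    (V.norm_starProjection_apply_le _).trans (X.le_of_opNorm_le hX p)
  have h2 : ‖Y (x - p) - V.starProjection (Y (x - p))‖ ≤ c * ‖x - p‖ := by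
    refine (norm_sub_starProjection_le V _ (zero_mem V)).trans ?_
    rw [sub_zero]
    exact Y.le_of_opNorm_le hY _
  have h1' := mul_self_le_mul_self (norm_nonneg _) h1
  have h2' := mul_self_le_mul_self (norm_nonneg _) h2
  calc _ ≤ c * ‖p‖ * (c * ‖p‖) + c * ‖x - p‖ * (c * ‖x - p‖) := add_le_add h1' h2'
    _ = c ^ 2 * (‖p‖ * ‖p‖ + ‖x - p‖ * ‖x - p‖) := by ring
    _ = (c * ‖x‖) ^ 2 := by rw [← hx]; ring

lemma isCompactOperator_starProjection (V : Submodule ℂ H) [FiniteDimensional ℂ V] :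
    IsCompactOperator (V.starProjection : H →L[ℂ] H) := by
  have : ProperSpace V := FiniteDimensional.proper ℂ V
  have h : IsCompactOperator (V.orthogonalProjectionOnto : H →L[ℂ] V) :=
    isCompactOperator_of_locallyCompactSpace_dom V.orthogonalProjectionOnto
  exact h.clm_comp V.subtypeL

/-- If the range of `K` is nearly contained in `V`, then compressing to `Vᗮ` an operator `D` that is
close to `K` gives an operator of small norm. -/
lemma norm_compression_orthogonal_le (V : Submodule ℂ H) [V.HasOrthogonalProjection]
    {D K : H →L[ℂ] H} {δ : ℝ} (hδ : 0 < δ) (hDK : ‖D - K‖ ≤ δ)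
    (hK : ∀ x, ∃ w ∈ V, ‖K x - w‖ ≤ δ * ‖x‖) :
    ‖(1 - V.starProjection) * (D * (1 - V.starProjection))‖ ≤ 2 * δ := by
  refine ContinuousLinearMap.opNorm_le_bound _ (by positivity) fun x => ?_
  set y := x - V.starProjection x with hy
  have hyx : ‖y‖ ≤ ‖x‖ := by simpa using norm_sub_starProjection_le V x (zero_mem V)
  obtain ⟨w, hw, hKw⟩ := hK y
  change ‖D y - V.starProjection (D y)‖ ≤ _
  calc _ ≤ ‖D y - w‖ := norm_sub_starProjection_le V _ hw
    _ = ‖(D - K) y + (K y - w)‖ := by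
        rw [_root_.sub_apply, sub_add_sub_cancel]
    _ ≤ ‖(D - K) y‖ + ‖K y - w‖ := norm_add_le _ _
    _ ≤ δ * ‖y‖ + δ * ‖y‖ := add_le_add ((D - K).le_of_opNorm_le hDK y) hKw
    _ = 2 * δ * ‖y‖ := by ring
    _ ≤ 2 * δ * ‖x‖ := by gcongr

/-! ### Correcting a lift by compact operators -/

section Step

variable {A : Type*} [NormedRing A] [StarRing A] [NormedAlgebra ℂ A]

/-- The average over `k < n` of the block-diagonal maps equal to `ψ` compressed to `V k` and to `Φ`
compressed to `(V k)ᗮ`. -/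
noncomputable def blend (V : ℕ → Submodule ℂ H) [∀ k, FiniteDimensional ℂ (V k)]
    (ψ Φ : A →ₗ[ℂ] (H →L[ℂ] H)) (n : ℕ) : A →ₗ[ℂ] (H →L[ℂ] H) :=
  (((n : ℝ)⁻¹ : ℝ) : ℂ) • ∑ k ∈ Finset.range n, (compression (V k).starProjection ψ +
    compression (1 - (V k).starProjection) Φ)

lemma blend_apply (V : ℕ → Submodule ℂ H) [∀ k, FiniteDimensional ℂ (V k)]
    (ψ Φ : A →ₗ[ℂ] (H →L[ℂ] H)) (n : ℕ) (a : A) :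
    blend V ψ Φ n a = (((n : ℝ)⁻¹ : ℝ) : ℂ) • ∑ k ∈ Finset.range n,
      ((V k).starProjection * (ψ a * (V k).starProjection) +
        (1 - (V k).starProjection) * (Φ a * (1 - (V k).starProjection))) := by
  simp only [blend, LinearMap.smul_apply, LinearMap.sum_apply, LinearMap.add_apply,
    compression_apply, star_sub, star_one, star_starProjection]

/-- Subtracting a fixed operator from the average can be done term by term. -/
lemma blend_apply_sub (V : ℕ → Submodule ℂ H) [∀ k, FiniteDimensional ℂ (V k)]
    (ψ Φ : A →ₗ[ℂ] (H →L[ℂ] H)) {n : ℕ} (hn : n ≠ 0) (a : A) (T : H →L[ℂ] H) :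
    blend V ψ Φ n a - T = (((n : ℝ)⁻¹ : ℝ) : ℂ) • ∑ k ∈ Finset.range n,
      ((V k).starProjection * (ψ a * (V k).starProjection) +
        (1 - (V k).starProjection) * (Φ a * (1 - (V k).starProjection)) - T) := by
  rw [blend_apply, Finset.sum_sub_distrib, smul_sub, Finset.sum_const, Finset.card_range,
    ← Nat.cast_smul_eq_nsmul ℂ n T, smul_smul]
  have : (((n : ℝ)⁻¹ : ℝ) : ℂ) * (n : ℂ) = 1 := by
    rw [Complex.ofReal_inv, Complex.ofReal_natCast, inv_mul_cancel₀ (Nat.cast_ne_zero.2 hn)]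
  rw [this, one_smul]

/-- The inductive step: if `ψ` and `Φ` nearly agree modulo compacts on a finite set `F`, then `Φ`
can be changed by compacts so that it nearly agrees with `ψ` in norm on `F`. -/
lemma exists_correction (ψ Φ : A →ₗ[ℂ] (H →L[ℂ] H)) (hψ : IsCompletelyPositive ψ)
    (hΦ : IsCompletelyPositive Φ) (hψc : ∀ a, ‖ψ a‖ ≤ ‖a‖) (hΦc : ∀ a, ‖Φ a‖ ≤ ‖a‖)
    (F : Finset A) {δ : ℝ} (hδ : 0 < δ)
    (hF : ∀ a ∈ F, ∃ k : H →L[ℂ] H, IsCompactOperator k ∧ ‖ψ a - Φ a - k‖ ≤ δ) :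
    ∃ Φ' : A →ₗ[ℂ] (H →L[ℂ] H), IsCompletelyPositive Φ' ∧ (∀ a, ‖Φ' a‖ ≤ ‖a‖) ∧
      (∀ a, IsCompactOperator (Φ' a - Φ a)) ∧ ∀ a ∈ F, ‖Φ' a - ψ a‖ ≤ 3 * δ := by
  choose! K hKc hK using hF
  obtain ⟨V, hfin, hmono, hT, hVK⟩ := exists_chain F (fun a => ψ a) K hKc hδ
  -- With this `n`, the corner terms `2 ‖ψ a‖ / √n` are at most `δ`.
  obtain ⟨n, hn⟩ := exists_nat_gt ((2 * (∑ a ∈ F, ‖a‖) / δ) ^ 2)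
  have hnpos : (0 : ℝ) < n := (sq_nonneg _).trans_lt hn
  have hn0 : n ≠ 0 := by rintro rfl; simp at hnpos
  have hnorm : ‖(((n : ℝ)⁻¹ : ℝ) : ℂ)‖ = (n : ℝ)⁻¹ := by
    rw [Complex.norm_real, Real.norm_of_nonneg (by positivity)]
  refine ⟨blend V ψ Φ n, ?_, fun a => ?_, fun a => ?_, fun a ha => ?_⟩
  · exact (IsCompletelyPositive.sum _ fun k _ =>
      (hψ.compression _).add (hΦ.compression _)).real_smul (by positivity)
  · rw [blend_apply, norm_smul, hnorm, inv_mul_le_iff₀ hnpos]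
    refine (norm_sum_le_of_le _ fun k _ =>
      norm_block_diagonal_le (V k) (hψc a) (hΦc a)).trans_eq ?_
    simp
  · rw [blend_apply_sub V ψ Φ hn0]
    change _ ∈ compactOperator (RingHom.id ℂ) H H
    refine Submodule.smul_mem _ _ (Submodule.sum_mem _ fun k _ => ?_)
    set P := (V k).starProjection with hP
    have hPc : IsCompactOperator P := isCompactOperator_starProjection (V k)
    have hl : ∀ X : H →L[ℂ] H, X * P ∈ compactOperator (RingHom.id ℂ) H H :=
      fun X => hPc.clm_comp X
    have hr : ∀ X : H →L[ℂ] H, P * X ∈ compactOperator (RingHom.id ℂ) H H :=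
      fun X => hPc.comp_clm X
    have : P * (ψ a * P) + (1 - P) * (Φ a * (1 - P)) - Φ a =
        P * (ψ a * P) - P * (Φ a) - Φ a * P + P * (Φ a * P) := by noncomm_ring
    rw [this]
    exact add_mem (sub_mem (sub_mem (hr _) (hr _)) (hl _)) (hr _)
  · have hbound : ‖∑ k ∈ Finset.range n, ((V k).starProjection * (ψ a * (V k).starProjection) +
        (1 - (V k).starProjection) * (Φ a * (1 - (V k).starProjection)) - ψ a)‖ ≤
        Real.sqrt n * ‖ψ a‖ + Real.sqrt n * ‖ψ a‖ + n * (2 * δ) := by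
      have hsplit : ∀ k, (V k).starProjection * (ψ a * (V k).starProjection) +
          (1 - (V k).starProjection) * (Φ a * (1 - (V k).starProjection)) - ψ a =
          -((V k).starProjection * ψ a * (1 - (V k).starProjection) +
            (1 - (V k).starProjection) * ψ a * (V k).starProjection +
            (1 - (V k).starProjection) * ((ψ a - Φ a) * (1 - (V k).starProjection))) :=
        fun k => by noncomm_ring
      simp only [hsplit]
      rw [Finset.sum_neg_distrib, norm_neg, Finset.sum_add_distrib, Finset.sum_add_distrib]
      refine norm_add₃_le.trans (add_le_add (add_le_add ?_ ?_) ?_)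
      · exact norm_sum_corner_le' V hmono _ (fun k x hx => (hT k a ha x hx).2) n
      · exact norm_sum_corner_le V hmono _ (fun k x hx => (hT k a ha x hx).1) n
      · refine (norm_sum_le_of_le _ fun k _ =>
          norm_compression_orthogonal_le (V k) hδ (hK a ha) (hVK k a ha)).trans_eq ?_
        simp
    rw [blend_apply_sub V ψ Φ hn0, norm_smul, hnorm, inv_mul_le_iff₀ hnpos]
    refine hbound.trans ?_
    have hs : 2 * (∑ a ∈ F, ‖a‖) / δ ≤ Real.sqrt n := Real.le_sqrt_of_sq_le hn.le
    rw [div_le_iff₀ hδ] at hs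
    have ha' : ‖ψ a‖ ≤ ∑ a ∈ F, ‖a‖ :=
      (hψc a).trans (Finset.single_le_sum (f := fun a => ‖a‖) (fun _ _ => norm_nonneg _) ha)
    have h2 : Real.sqrt n * (2 * ‖ψ a‖) ≤ Real.sqrt n * (Real.sqrt n * δ) :=
      mul_le_mul_of_nonneg_left (by linarith) (Real.sqrt_nonneg _)
    rw [← mul_assoc (Real.sqrt n) (Real.sqrt n), Real.mul_self_sqrt hnpos.le] at h2
    linarith

end Step

end Helpers

/-! ### The limit of the corrected lifts -/

/-- Arveson: liftable contractive completely positive maps into the Calkin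
algebra `B(H)/K(H)` are closed under point-norm limits.  The Calkin algebra is encoded by
working with representatives modulo the compact operators: `R` is a set-theoretic
representative of a ∗-homomorphism `Φ̃ : A → B(H)/K(H)` (it is additive, ℂ-homogeneous,
multiplicative and star-preserving modulo compacts); `Φₙ` are contractive completely
positive maps `A → B(H)` whose classes modulo compacts converge pointwise in the quotient
norm to `Φ̃`; the conclusion produces a contractive completely positive lift `Φ` of `Φ̃`,
i.e. `π ∘ Φ = Φ̃`. -/
theorem arveson_pointNorm_limit_liftable
    {A : Type*} [NormedRing A] [StarRing A] [CStarRing A]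
    [NormedAlgebra ℂ A] [CompleteSpace A] [StarModule ℂ A]
    [TopologicalSpace.SeparableSpace A]
    {H : Type*} [NormedAddCommGroup H] [InnerProductSpace ℂ H] [CompleteSpace H]
    [TopologicalSpace.SeparableSpace H]
    (R : A → (H →L[ℂ] H))
    (hadd : ∀ a b : A, IsCompactOperator (R (a + b) - (R a + R b)))
    (hsmul : ∀ (c : ℂ) (a : A), IsCompactOperator (R (c • a) - c • R a))
    (hmul : ∀ a b : A, IsCompactOperator (R (a * b) - R a * R b))
    (hstar : ∀ a : A, IsCompactOperator (R (star a) - star (R a)))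
    (Φₙ : ℕ → (A →ₗ[ℂ] (H →L[ℂ] H)))
    (hcp : ∀ n, IsCompletelyPositive (Φₙ n))
    (hcontr : ∀ n a, ‖Φₙ n a‖ ≤ ‖a‖)
    (hconv : ∀ a : A, ∀ ε > (0 : ℝ), ∃ N : ℕ, ∀ n ≥ N,
      ∃ k : H →L[ℂ] H, IsCompactOperator k ∧ ‖Φₙ n a - R a - k‖ < ε) :
    ∃ Φ : A →ₗ[ℂ] (H →L[ℂ] H), IsCompletelyPositive Φ ∧ (∀ a, ‖Φ a‖ ≤ ‖a‖) ∧
      ∀ a, IsCompactOperator (Φ a - R a) := by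
  classical
  let d : ℕ → A := TopologicalSpace.denseSeq A
  -- `s n ≥ n` is an index at which the approximation is within `2⁻ⁿ` at `d 0, …, d n`.
  have hs : ∀ n : ℕ, ∃ m ≥ n, ∀ i ≤ n, ∃ k : H →L[ℂ] H, IsCompactOperator k ∧
      ‖Φₙ m (d i) - R (d i) - k‖ < (1 / 2) ^ n := by
    intro n
    choose N hN using fun i => hconv (d i) ((1 / 2) ^ n) (by positivity)
    refine ⟨max n ((Finset.range (n + 1)).sup N), le_max_left _ _, fun i hi => hN i _ ?_⟩
    exact (Finset.le_sup (Finset.mem_range.2 (by omega))).trans (le_max_right _ _)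
  choose s hsn hs using hs
  let Good : ℕ → (A →ₗ[ℂ] (H →L[ℂ] H)) → Prop := fun n ψ =>
    IsCompletelyPositive ψ ∧ (∀ a, ‖ψ a‖ ≤ ‖a‖) ∧ ∀ a, IsCompactOperator (ψ a - Φₙ (s n) a)
  have hstep : ∀ n ψ, Good n ψ → ∃ ψ', Good (n + 1) ψ' ∧
      ∀ i ≤ n, ‖ψ' (d i) - ψ (d i)‖ ≤ 3 * (2 * (1 / 2) ^ n) := by
    rintro n ψ ⟨h1, h2, h3⟩
    obtain ⟨ψ', g1, g2, g3, g4⟩ := exists_correction ψ (Φₙ (s (n + 1))) h1 (hcp _) h2 (hcontr _)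
      ((Finset.range (n + 1)).image d) (δ := 2 * (1 / 2) ^ n) (by positivity) (by
        intro a ha
        obtain ⟨i, hi, rfl⟩ := Finset.mem_image.1 ha
        have hi : i ≤ n := Nat.lt_succ_iff.1 (Finset.mem_range.1 hi)
        obtain ⟨k, hk, hk'⟩ := hs n i hi
        obtain ⟨l, hl, hl'⟩ := hs (n + 1) i (by omega)
        refine ⟨ψ (d i) - Φₙ (s n) (d i) + k - l, ((h3 (d i)).add hk).sub hl, ?_⟩
        have heq : ψ (d i) - Φₙ (s (n + 1)) (d i) - (ψ (d i) - Φₙ (s n) (d i) + k - l) =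
            (Φₙ (s n) (d i) - R (d i) - k) - (Φₙ (s (n + 1)) (d i) - R (d i) - l) := by abel
        rw [heq]
        refine (norm_sub_le _ _).trans ?_
        have : ((1 : ℝ) / 2) ^ (n + 1) ≤ (1 / 2) ^ n :=
          pow_le_pow_of_le_one (by norm_num) (by norm_num) (Nat.le_succ n)
        linarith)
    exact ⟨ψ', ⟨g1, g2, g3⟩, fun i hi =>
      g4 _ (Finset.mem_image_of_mem d (Finset.mem_range.2 (by omega)))⟩
  choose! next hnext hclose using hstep
  let ψ : ℕ → (A →ₗ[ℂ] (H →L[ℂ] H)) := fun n => Nat.rec (Φₙ (s 0)) next n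
  have hψ : ∀ n, Good n (ψ n) := by
    intro n
    induction n with
    | zero => exact ⟨hcp _, hcontr _, fun a => by
        rw [show ψ 0 a - Φₙ (s 0) a = 0 from sub_self _]; exact isCompactOperator_zero⟩
    | succ n ih => exact hnext n _ ih
  have hψd : ∀ n, ∀ i ≤ n, ‖ψ (n + 1) (d i) - ψ n (d i)‖ ≤ 3 * (2 * (1 / 2) ^ n) :=
    fun n => hclose n _ (hψ n)
  have hcauchyd : ∀ i, CauchySeq fun n => ψ n (d i) := by
    intro i
    -- The geometric bound on consecutive differences only holds from index `i` on.
    rw [← cauchySeq_shift i]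
    refine cauchySeq_of_le_geometric (1 / 2) 6 (by norm_num) fun n => ?_
    rw [dist_comm, dist_eq_norm]
    have h := hψd (n + i) i (by omega)
    have h2 : ((1 : ℝ) / 2) ^ (n + i) ≤ (1 / 2) ^ n :=
      pow_le_pow_of_le_one (by norm_num) (by norm_num) (by omega)
    rw [show n + i + 1 = n + 1 + i by ring] at h
    linarith
  have hcauchy : ∀ a, CauchySeq fun n => ψ n a := by
    intro a
    rw [Metric.cauchySeq_iff']
    intro ε hε
    obtain ⟨i, hi⟩ := Metric.denseRange_iff.1 (TopologicalSpace.denseRange_denseSeq A) a (ε / 3)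
      (by positivity)
    obtain ⟨N, hN⟩ := Metric.cauchySeq_iff'.1 (hcauchyd i) (ε / 3) (by positivity)
    refine ⟨N, fun n hn => ?_⟩
    have hN := hN n hn
    rw [dist_eq_norm] at hi hN ⊢
    have e : ψ n a - ψ N a =
        ψ n (a - d i) + (ψ n (d i) - ψ N (d i)) - ψ N (a - d i) := by
      rw [map_sub, map_sub]; abel
    rw [e]
    have h1 := (hψ n).2.1 (a - d i)
    have h2 := (hψ N).2.1 (a - d i)
    have h3 := norm_sub_le (ψ n (a - d i) + (ψ n (d i) - ψ N (d i))) (ψ N (a - d i))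
    have h4 := norm_add_le (ψ n (a - d i)) (ψ n (d i) - ψ N (d i))
    change ‖a - d i‖ < ε / 3 at hi
    linarith
  choose L hL using fun a => cauchySeq_tendsto_of_complete (hcauchy a)
  let Φ : A →ₗ[ℂ] (H →L[ℂ] H) :=
    { toFun := L
      map_add' := fun a b => tendsto_nhds_unique (hL (a + b)) (by
        simpa only [map_add] using (hL a).add (hL b))
      map_smul' := fun c a => tendsto_nhds_unique (hL (c • a)) (by
        simpa only [map_smul, RingHom.id_apply] using (hL a).const_smul c) }
  refine ⟨Φ, isCompletelyPositive_of_tendsto (fun n => (hψ n).1) hL,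
    fun a => le_of_tendsto' (hL a).norm fun n => (hψ n).2.1 a, fun a => ?_⟩
  -- `Φ a - R a` is the norm limit of the compact operators `ψ n a - Φₙ (s n) a + k`.
  have hmem : Φ a - R a ∈ closure {T : H →L[ℂ] H | IsCompactOperator T} := by
    rw [Metric.mem_closure_iff]
    intro ε hε
    obtain ⟨N, hN⟩ := hconv a (ε / 2) (by positivity)
    obtain ⟨n, hn, hnN⟩ := (((Metric.tendsto_nhds.1 (hL a)) (ε / 2) (by positivity)).and
      (Filter.eventually_ge_atTop N)).exists
    obtain ⟨k, hk, hk'⟩ := hN (s n) (hnN.trans (hsn n))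
    refine ⟨ψ n a - Φₙ (s n) a + k, ((hψ n).2.2 a).add hk, ?_⟩
    rw [dist_comm, dist_eq_norm] at hn
    rw [dist_eq_norm]
    have e : Φ a - R a - (ψ n a - Φₙ (s n) a + k) =
        (L a - ψ n a) + (Φₙ (s n) a - R a - k) := by
      change L a - R a - _ = _
      abel
    rw [e]
    exact (norm_add_le _ _).trans_lt (by linarith)
  exact isClosed_setOfPred_isCompactOperator.closure_subset hmem
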